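/- arXiv:2312.16426 — 2 statements merged into one kernel-verified Lean document; each statement's English description precedes it below -/
import Mathlib

section
/- Assume hypothesis (H4) and let 1 < μ < 2. The Fredholm integral equation u(x) = −(κ(ψ(x)−ψ_a)/(2Γ(μ))) ∫_a^b ψ'(τ)(ψ_b−ψ(τ))^{μ−1} f(τ, u(τ)) dτ + (1/Γ(μ)) ∫_a^x ψ'(τ)(ψ(x)−ψ(τ))^{μ−1} f(τ, u(τ)) dτ possesses a unique solution u ∈ C[a,b]. -/
/-!
The right-hand side of the equation is `T (f(·, u))`, where
`T g x = I g x - (ψ x - ψ a) / (ψ b - ψ a) • I g b` and `I` is the fractional integral of order `μ`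
with respect to `ψ`. Since `I 1 x = (ψ x - ψ a) ^ μ / Γ(μ + 1)`, both terms of `T g` are bounded by
`(ψ b - ψ a) ^ μ / Γ(μ + 1)` times the sup norm of `g`. The bound on `C_L` says precisely that
`2 (ψ b - ψ a) ^ μ / Γ(μ + 1) * C_L < 1`, so `u ↦ T (f(·, u))` is a contraction of `C([a, b])`.
-/

open MeasureTheory Set

section Superposition

variable {X E F : Type*} [TopologicalSpace X] [PseudoMetricSpace E] [PseudoMetricSpace F]

/-- The superposition (Nemytskii) operator `u ↦ f(·, u(·))`, which turns a nonlinear integral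
equation into a fixed point equation on a space of continuous functions. -/
def superposition (f : C(X × E, F)) (u : C(X, E)) : C(X, F) :=
  f.comp ((ContinuousMap.id X).prodMk u)

lemma lipschitzWith_superposition [CompactSpace X] {f : C(X × E, F)} {L : NNReal}
    (hf : ∀ x, LipschitzWith L fun y => f (x, y)) : LipschitzWith L (superposition f) := by
  refine LipschitzWith.of_dist_le_mul fun u v => ?_
  rw [ContinuousMap.dist_le (by positivity)]
  intro x
  calc dist (f (x, u x)) (f (x, v x)) ≤ L * dist (u x) (v x) := (hf x).dist_le_mul _ _
    _ ≤ L * dist u v := by gcongr; exact ContinuousMap.dist_apply_le_dist x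

end Superposition

section Kernel

variable {μ : ℝ} {ψ : ℝ → ℝ}

lemma monotoneOn_Icc_of_deriv_nonneg {a b : ℝ} (hψ : Differentiable ℝ ψ)
    (hψ' : ∀ x ∈ Icc a b, 0 ≤ deriv ψ x) : MonotoneOn ψ (Icc a b) :=
  monotoneOn_of_deriv_nonneg (convex_Icc a b) hψ.continuous.continuousOn hψ.differentiableOn
    fun x hx => hψ' x (interior_subset hx)

lemma continuous_deriv_mul_sub_rpow (hμ : 1 ≤ μ) (hψ : ContDiff ℝ 1 ψ) :
    Continuous fun p : ℝ × ℝ => deriv ψ p.2 * (ψ p.1 - ψ p.2) ^ (μ - 1) := by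
  have hψc : Continuous ψ := hψ.continuous
  exact ((hψ.continuous_deriv le_rfl).comp continuous_snd).mul <|
    (by fun_prop : Continuous fun p : ℝ × ℝ => ψ p.1 - ψ p.2).rpow_const
      fun _ => Or.inr (sub_nonneg.2 hμ)

lemma intervalIntegrable_deriv_mul_sub_rpow (hμ : 1 ≤ μ) (hψ : ContDiff ℝ 1 ψ) (a b x : ℝ) :
    IntervalIntegrable (fun τ => deriv ψ τ * (ψ x - ψ τ) ^ (μ - 1)) volume a b :=
  ((continuous_deriv_mul_sub_rpow hμ hψ).comp (Continuous.prodMk_right x)).intervalIntegrable _ _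

lemma integral_deriv_mul_sub_rpow (hμ : 1 ≤ μ) (hψ : ContDiff ℝ 1 ψ) (a x : ℝ) :
    ∫ τ in a..x, deriv ψ τ * (ψ x - ψ τ) ^ (μ - 1) = (ψ x - ψ a) ^ μ / μ := by
  have hμ0 : μ ≠ 0 := by positivity
  have hprim : ∀ τ ∈ uIcc a x, HasDerivAt (fun τ => -((ψ x - ψ τ) ^ μ / μ))
      (deriv ψ τ * (ψ x - ψ τ) ^ (μ - 1)) τ := by
    intro τ _
    have hψτ : HasDerivAt ψ (deriv ψ τ) τ := (hψ.differentiable one_ne_zero τ).hasDerivAt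
    refine (((hψτ.const_sub (ψ x)).rpow_const (Or.inr hμ)).div_const μ).neg.congr_deriv ?_
    field_simp
  rw [intervalIntegral.integral_eq_sub_of_hasDerivAt hprim
    (intervalIntegrable_deriv_mul_sub_rpow hμ hψ a x x), sub_self, Real.zero_rpow hμ0]
  ring

end Kernel

section Operators

variable {E : Type*} [NormedAddCommGroup E] [NormedSpace ℝ E]
  {a b x μ M : ℝ} {ψ : ℝ → ℝ} {g h : ℝ → E}

/-- The left-sided Riemann–Liouville fractional integral of order `μ` of `g` with respect to `ψ`,
based at `a`. -/
noncomputable def fractionalIntegral (μ : ℝ) (ψ : ℝ → ℝ) (a : ℝ) (g : ℝ → E) (x : ℝ) : E :=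
  (1 / Real.Gamma μ) • ∫ τ in a..x, (deriv ψ τ * (ψ x - ψ τ) ^ (μ - 1)) • g τ

lemma continuous_fractionalIntegral (hμ : 1 ≤ μ) (hψ : ContDiff ℝ 1 ψ) (hg : Continuous g) :
    Continuous (fractionalIntegral μ ψ a g) :=
  (intervalIntegral.continuous_parametric_intervalIntegral_of_continuous
    ((continuous_deriv_mul_sub_rpow hμ hψ).smul (hg.comp continuous_snd))
    continuous_id).const_smul _

lemma fractionalIntegral_congr (hax : a ≤ x) (hgh : EqOn g h (Icc a x)) :
    fractionalIntegral μ ψ a g x = fractionalIntegral μ ψ a h x := by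
  unfold fractionalIntegral
  congr 1
  refine intervalIntegral.integral_congr fun τ hτ => ?_
  rw [uIcc_of_le hax] at hτ
  simp only [hgh hτ]

lemma fractionalIntegral_sub (hμ : 1 ≤ μ) (hψ : ContDiff ℝ 1 ψ) (hg : Continuous g)
    (hh : Continuous h) :
    fractionalIntegral μ ψ a (g - h) x
      = fractionalIntegral μ ψ a g x - fractionalIntegral μ ψ a h x := by
  have hint := intervalIntegrable_deriv_mul_sub_rpow hμ hψ a x x
  simp only [fractionalIntegral, Pi.sub_apply, smul_sub]
  rw [intervalIntegral.integral_sub (hint.smul_continuousOn hg.continuousOn)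
    (hint.smul_continuousOn hh.continuousOn), smul_sub]

lemma norm_fractionalIntegral_le (hμ : 1 ≤ μ) (hψ : ContDiff ℝ 1 ψ) (hax : a ≤ x)
    (hψ' : ∀ τ ∈ Icc a x, 0 ≤ deriv ψ τ) (hg : ∀ τ ∈ Icc a x, ‖g τ‖ ≤ M) :
    ‖fractionalIntegral μ ψ a g x‖ ≤ (ψ x - ψ a) ^ μ / Real.Gamma (μ + 1) * M := by
  have hμ0 : 0 < μ := by positivity
  have hmono : MonotoneOn ψ (Icc a x) :=
    monotoneOn_Icc_of_deriv_nonneg (hψ.differentiable one_ne_zero) hψ'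
  have hpoint : ∀ τ ∈ Ioc a x, ‖(deriv ψ τ * (ψ x - ψ τ) ^ (μ - 1)) • g τ‖
      ≤ deriv ψ τ * (ψ x - ψ τ) ^ (μ - 1) * M := by
    intro τ hτ
    have hτ' : τ ∈ Icc a x := Ioc_subset_Icc_self hτ
    have hkernel : 0 ≤ deriv ψ τ * (ψ x - ψ τ) ^ (μ - 1) :=
      mul_nonneg (hψ' τ hτ') <| Real.rpow_nonneg
        (sub_nonneg.2 (hmono hτ' (right_mem_Icc.2 hax) hτ.2)) _
    rw [norm_smul, Real.norm_of_nonneg hkernel]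
    exact mul_le_mul_of_nonneg_left (hg τ hτ') hkernel
  have hintegral : ‖∫ τ in a..x, (deriv ψ τ * (ψ x - ψ τ) ^ (μ - 1)) • g τ‖
      ≤ (ψ x - ψ a) ^ μ / μ * M := by
    rw [← integral_deriv_mul_sub_rpow hμ hψ, ← intervalIntegral.integral_mul_const]
    exact intervalIntegral.norm_integral_le_of_norm_le hax (.of_forall hpoint)
      ((intervalIntegrable_deriv_mul_sub_rpow hμ hψ a x x).mul_const M)
  calc ‖fractionalIntegral μ ψ a g x‖
      = 1 / Real.Gamma μ * ‖∫ τ in a..x, (deriv ψ τ * (ψ x - ψ τ) ^ (μ - 1)) • g τ‖ := by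
        rw [fractionalIntegral, norm_smul, Real.norm_of_nonneg (by positivity)]
    _ ≤ 1 / Real.Gamma μ * ((ψ x - ψ a) ^ μ / μ * M) := by gcongr
    _ = (ψ x - ψ a) ^ μ / Real.Gamma (μ + 1) * M := by
        rw [Real.Gamma_add_one hμ0.ne']
        field_simp

/-- The linear integral operator of the Fredholm equation: the right-hand side of the equation,
with `g τ` in place of `f(τ, u(τ))`. -/
noncomputable def fredholmOperator (μ : ℝ) (ψ : ℝ → ℝ) (a b : ℝ) (g : ℝ → E) (x : ℝ) : E :=
  -(2 / (ψ b - ψ a) * (ψ x - ψ a) / (2 * Real.Gamma μ)) •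
      (∫ τ in a..b, (deriv ψ τ * (ψ b - ψ τ) ^ (μ - 1)) • g τ) +
    (1 / Real.Gamma μ) • ∫ τ in a..x, (deriv ψ τ * (ψ x - ψ τ) ^ (μ - 1)) • g τ

lemma fredholmOperator_eq_sub (μ : ℝ) (ψ : ℝ → ℝ) (a b : ℝ) (g : ℝ → E) (x : ℝ) :
    fredholmOperator μ ψ a b g x = fractionalIntegral μ ψ a g x -
      ((ψ x - ψ a) / (ψ b - ψ a)) • fractionalIntegral μ ψ a g b := by
  have hcoeff : 2 / (ψ b - ψ a) * (ψ x - ψ a) / (2 * Real.Gamma μ)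
      = (ψ x - ψ a) / (ψ b - ψ a) * (1 / Real.Gamma μ) := by ring
  rw [fredholmOperator, hcoeff, neg_smul, neg_add_eq_sub, fractionalIntegral, fractionalIntegral,
    smul_smul]

lemma continuous_fredholmOperator (hμ : 1 ≤ μ) (hψ : ContDiff ℝ 1 ψ) (hg : Continuous g) :
    Continuous (fredholmOperator μ ψ a b g) := by
  have hψc : Continuous ψ := hψ.continuous
  have hI : Continuous (fractionalIntegral μ ψ a g) := continuous_fractionalIntegral hμ hψ hg
  rw [funext (fredholmOperator_eq_sub μ ψ a b g)]
  fun_prop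

lemma fredholmOperator_congr (hx : x ∈ Icc a b) (hgh : EqOn g h (Icc a b)) :
    fredholmOperator μ ψ a b g x = fredholmOperator μ ψ a b h x := by
  rw [fredholmOperator_eq_sub, fredholmOperator_eq_sub,
    fractionalIntegral_congr hx.1 (hgh.mono (Icc_subset_Icc_right hx.2)),
    fractionalIntegral_congr (hx.1.trans hx.2) hgh]

lemma fredholmOperator_sub (hμ : 1 ≤ μ) (hψ : ContDiff ℝ 1 ψ) (hg : Continuous g)
    (hh : Continuous h) :
    fredholmOperator μ ψ a b (g - h) x
      = fredholmOperator μ ψ a b g x - fredholmOperator μ ψ a b h x := by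
  simp only [fredholmOperator_eq_sub, fractionalIntegral_sub hμ hψ hg hh, smul_sub]
  abel

lemma norm_fredholmOperator_le (hμ : 1 ≤ μ) (hψ : ContDiff ℝ 1 ψ)
    (hψ' : ∀ τ ∈ Icc a b, 0 ≤ deriv ψ τ) (hx : x ∈ Icc a b) (hg : ∀ τ ∈ Icc a b, ‖g τ‖ ≤ M) :
    ‖fredholmOperator μ ψ a b g x‖ ≤ 2 * (ψ b - ψ a) ^ μ / Real.Gamma (μ + 1) * M := by
  have hab : a ≤ b := hx.1.trans hx.2
  have hxb : Icc a x ⊆ Icc a b := Icc_subset_Icc_right hx.2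
  have hM : 0 ≤ M := (norm_nonneg _).trans (hg a (left_mem_Icc.2 hab))
  have hmono : MonotoneOn ψ (Icc a b) :=
    monotoneOn_Icc_of_deriv_nonneg (hψ.differentiable one_ne_zero) hψ'
  have hax : 0 ≤ ψ x - ψ a := sub_nonneg.2 (hmono (left_mem_Icc.2 hab) hx hx.1)
  have hxb' : ψ x - ψ a ≤ ψ b - ψ a := sub_le_sub_right (hmono hx (right_mem_Icc.2 hab) hx.2) _
  have hIx : ‖fractionalIntegral μ ψ a g x‖ ≤ (ψ b - ψ a) ^ μ / Real.Gamma (μ + 1) * M :=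
    (norm_fractionalIntegral_le hμ hψ hx.1 (fun τ hτ => hψ' τ (hxb hτ))
      fun τ hτ => hg τ (hxb hτ)).trans (by gcongr)
  have hIb : ‖((ψ x - ψ a) / (ψ b - ψ a)) • fractionalIntegral μ ψ a g b‖
      ≤ (ψ b - ψ a) ^ μ / Real.Gamma (μ + 1) * M := by
    rw [norm_smul, Real.norm_of_nonneg (div_nonneg hax (hax.trans hxb'))]
    exact (mul_le_of_le_one_left (norm_nonneg _)
      (div_le_one_of_le₀ hxb' (hax.trans hxb'))).trans
      (norm_fractionalIntegral_le hμ hψ hab hψ' hg)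
  rw [fredholmOperator_eq_sub]
  exact (norm_sub_le_of_le hIx hIb).trans_eq (by ring)

/-- `fredholmOperator` as a self-map of `C([a, b], E)`. Its argument is extended to `ℝ` by the
values at the endpoints, so that the integrands are continuous everywhere. -/
noncomputable def fredholmMap (hμ : 1 ≤ μ) (hψ : ContDiff ℝ 1 ψ) (hab : a ≤ b)
    (g : C(Icc a b, E)) : C(Icc a b, E) where
  toFun x := fredholmOperator μ ψ a b (IccExtend hab g) x
  continuous_toFun :=
    (continuous_fredholmOperator hμ hψ g.continuous.Icc_extend').comp continuous_subtype_val

lemma lipschitzWith_fredholmMap (hμ : 1 ≤ μ) (hψ : ContDiff ℝ 1 ψ) (hab : a ≤ b)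
    (hψ' : ∀ τ ∈ Icc a b, 0 ≤ deriv ψ τ) :
    LipschitzWith (2 * (ψ b - ψ a) ^ μ / Real.Gamma (μ + 1)).toNNReal
      (fredholmMap (E := E) hμ hψ hab) := by
  refine LipschitzWith.of_dist_le_mul fun g h => ?_
  rw [ContinuousMap.dist_le (by positivity)]
  intro x
  rw [dist_eq_norm]
  change ‖fredholmOperator μ ψ a b _ x - fredholmOperator μ ψ a b _ x‖ ≤ _
  rw [← fredholmOperator_sub hμ hψ g.continuous.Icc_extend' h.continuous.Icc_extend']
  refine (norm_fredholmOperator_le hμ hψ hψ' x.2 fun τ _ => ?_).trans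
    (mul_le_mul_of_nonneg_right (Real.le_coe_toNNReal _) dist_nonneg)
  rw [Pi.sub_apply, ← dist_eq_norm]
  exact ContinuousMap.dist_apply_le_dist _

end Operators

section FixedPoint

variable {E : Type*} [NormedAddCommGroup E] [NormedSpace ℝ E]
  {a b μ CL : ℝ} {ψ : ℝ → ℝ} {f : ℝ → E → E}

lemma isFixedPt_fredholmMap_comp_superposition_iff (hμ : 1 ≤ μ) (hψ : ContDiff ℝ 1 ψ)
    (hab : a ≤ b) {F : C(Icc a b × E, E)} (hF : ∀ x y, F (x, y) = f x y)
    {u : ℝ → E} {U : C(Icc a b, E)} (hU : ∀ x, U x = u x) :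
    Function.IsFixedPt (fredholmMap hμ hψ hab ∘ superposition F) U ↔
      EqOn u (fredholmOperator μ ψ a b fun τ => f τ (u τ)) (Icc a b) := by
  have hext : EqOn (IccExtend hab (superposition F U)) (fun τ => f τ (u τ)) (Icc a b) := by
    intro τ hτ
    rw [IccExtend_of_mem _ _ hτ]
    exact (hF ⟨τ, hτ⟩ _).trans (by rw [hU])
  have happly : ∀ x : Icc a b, (fredholmMap hμ hψ hab ∘ superposition F) U x
      = fredholmOperator μ ψ a b (fun τ => f τ (u τ)) x :=
    fun x => fredholmOperator_congr x.2 hext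
  rw [Function.IsFixedPt, ContinuousMap.ext_iff]
  simp only [happly, hU, Subtype.forall, EqOn, eq_comm]

lemma mul_lt_one_of_lt_rpow_mul_Gamma_div {L : ℝ} (hL : 0 < L) (hμ : -1 < μ)
    (hCL : CL < (2 / L) ^ μ * Real.Gamma (μ + 1) / 2 ^ (μ + 1)) :
    2 * L ^ μ / Real.Gamma (μ + 1) * CL < 1 := by
  have hΓ : 0 < Real.Gamma (μ + 1) := Real.Gamma_pos_of_pos (by linarith)
  have hthreshold : (2 / L) ^ μ * Real.Gamma (μ + 1) / 2 ^ (μ + 1)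
      = (2 * L ^ μ / Real.Gamma (μ + 1))⁻¹ := by
    rw [Real.div_rpow zero_le_two hL.le, Real.rpow_add_one two_ne_zero]
    field_simp
  rw [hthreshold] at hCL
  exact (lt_inv_mul_iff₀ (by positivity)).1 (by rwa [mul_one])

lemma contractingWith_fredholmMap_comp_superposition (hμ : 1 ≤ μ) (hψ : ContDiff ℝ 1 ψ)
    (hab : a ≤ b) (hψab : ψ a < ψ b) (hψ' : ∀ x ∈ Icc a b, 0 ≤ deriv ψ x)
    {F : C(Icc a b × E, E)} (hF : ∀ x y₁ y₂, ‖F (x, y₁) - F (x, y₂)‖ ≤ CL * ‖y₁ - y₂‖)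
    (hCL : CL < (2 / (ψ b - ψ a)) ^ μ * Real.Gamma (μ + 1) / 2 ^ (μ + 1)) :
    ContractingWith ((2 * (ψ b - ψ a) ^ μ / Real.Gamma (μ + 1)).toNNReal * CL.toNNReal)
      (fredholmMap hμ hψ hab ∘ superposition F) := by
  have hL : 0 < ψ b - ψ a := sub_pos.2 hψab
  have hlip : LipschitzWith CL.toNNReal (superposition F) :=
    lipschitzWith_superposition fun x => LipschitzWith.of_dist_le' fun y₁ y₂ => by
      simpa only [dist_eq_norm] using hF x y₁ y₂
  refine ⟨?_, (lipschitzWith_fredholmMap hμ hψ hab hψ').comp hlip⟩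
  rw [← Real.toNNReal_mul (by positivity), Real.toNNReal_lt_one]
  exact mul_lt_one_of_lt_rpow_mul_Gamma_div hL (by linarith) hCL

theorem stmt_7_general [CompleteSpace E] (hab : a ≤ b) (hψab : ψ a < ψ b) (hψ : ContDiff ℝ 1 ψ)
    (hψ' : ∀ x ∈ Icc a b, 0 ≤ deriv ψ x) (hμ : 1 ≤ μ)
    (hfc : ContinuousOn (fun p : ℝ × E => f p.1 p.2) (Icc a b ×ˢ univ))
    (hLip : ∀ x ∈ Icc a b, ∀ y₁ y₂ : E, ‖f x y₁ - f x y₂‖ ≤ CL * ‖y₁ - y₂‖)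
    (hCL : CL < (2 / (ψ b - ψ a)) ^ μ * Real.Gamma (μ + 1) / 2 ^ (μ + 1)) :
    ∃ u : ℝ → E,
      (ContinuousOn u (Icc a b) ∧
        EqOn u (fredholmOperator μ ψ a b fun τ => f τ (u τ)) (Icc a b)) ∧
      ∀ v : ℝ → E,
        (ContinuousOn v (Icc a b) ∧
          EqOn v (fredholmOperator μ ψ a b fun τ => f τ (v τ)) (Icc a b)) →
        EqOn v u (Icc a b) := by
  let F : C(Icc a b × E, E) := ⟨fun p => f p.1 p.2, hfc.comp_continuous
    (f := fun p : Icc a b × E => ((p.1 : ℝ), p.2)) (by fun_prop) fun p => ⟨p.1.2, mem_univ _⟩⟩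
  have hcontr : ContractingWith _ (fredholmMap hμ hψ hab ∘ superposition F) :=
    contractingWith_fredholmMap_comp_superposition hμ hψ hab hψab hψ' (fun x => hLip x x.2) hCL
  have hiff {u : ℝ → E} {U : C(Icc a b, E)} (hU : ∀ x, U x = u x) :=
    isFixedPt_fredholmMap_comp_superposition_iff hμ hψ hab (F := F) (fun _ _ => rfl) hU
  let U : C(Icc a b, E) := hcontr.fixedPoint
  have hU : ∀ x, U x = IccExtend hab U x := fun x => (IccExtend_val hab U x).symm
  refine ⟨IccExtend hab U, ⟨U.continuous.Icc_extend'.continuousOn,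
    (hiff hU).1 hcontr.fixedPoint_isFixedPt⟩, ?_⟩
  rintro v ⟨hvc, hv⟩ x hx
  let V : C(Icc a b, E) := ⟨(Icc a b).domRestrict v, hvc.domRestrict⟩
  have hVU : V = U := hcontr.fixedPoint_unique ((hiff fun _ => rfl).2 hv)
  rw [IccExtend_of_mem _ _ hx, ← hVU]
  rfl

end FixedPoint

theorem stmt_7
    (a b CL μ : ℝ) (ψ : ℝ → ℝ) (f : ℝ → ℝ → ℝ)
    (hab : a < b)
    (hψ : ContDiff ℝ 1 ψ)
    (hmono : StrictMonoOn ψ (Icc a b))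
    (hψpos : ∀ x ∈ Icc a b, 0 < deriv ψ x)
    (hμ1 : 1 < μ) (hμ2 : μ < 2)
    (hfc : ContinuousOn (fun p : ℝ × ℝ => f p.1 p.2) (Icc a b ×ˢ (univ : Set ℝ)))
    (hLip : ∀ x ∈ Icc a b, ∀ y₁ y₂ : ℝ, |f x y₁ - f x y₂| ≤ CL * |y₁ - y₂|)
    (hCL : CL < (2 / (ψ b - ψ a)) ^ μ * Real.Gamma (μ + 1) / 2 ^ (μ + 1)) :
    ∃ u : ℝ → ℝ,
      (ContinuousOn u (Icc a b) ∧
        ∀ x ∈ Icc a b,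
          u x = -(2 / (ψ b - ψ a) * (ψ x - ψ a) / (2 * Real.Gamma μ)) *
              (∫ τ in a..b, deriv ψ τ * (ψ b - ψ τ) ^ (μ - 1) * f τ (u τ)) +
            (1 / Real.Gamma μ) *
              ∫ τ in a..x, deriv ψ τ * (ψ x - ψ τ) ^ (μ - 1) * f τ (u τ)) ∧
      ∀ v : ℝ → ℝ,
        (ContinuousOn v (Icc a b) ∧
          ∀ x ∈ Icc a b,
            v x = -(2 / (ψ b - ψ a) * (ψ x - ψ a) / (2 * Real.Gamma μ)) *
                (∫ τ in a..b, deriv ψ τ * (ψ b - ψ τ) ^ (μ - 1) * f τ (v τ)) +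
              (1 / Real.Gamma μ) *
                ∫ τ in a..x, deriv ψ τ * (ψ x - ψ τ) ^ (μ - 1) * f τ (v τ)) →
        ∀ x ∈ Icc a b, v x = u x := by
  exact stmt_7_general hab.le (hmono (left_mem_Icc.2 hab.le) (right_mem_Icc.2 hab.le) hab) hψ
    (fun x hx => (hψpos x hx).le) hμ1.le hfc hLip hCL
end

section
/- Let μ > 0 and C > 0 be constants. Assume ξ is a nonnegative, nondecreasing, locally integrable function on [a,b] and η is continuous and nonnegative on [a,b] with η(x) ≤ ξ(x) + C ∫_a^x ψ'(s)(ψ(x)−ψ(s))^{μ−1} η(s) ds for all x ∈ [a,b]. Then for all x ∈ [a,b], η(x) ≤ ξ(x) · E_μ(C Γ(μ)(ψ(x)−ψ_a)^μ), where E_μ(s) = Σ_{k=0}^∞ s^k/Γ(1+kμ) is the Mittag-Leffler function. -/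
open MeasureTheory Set

/-- One-parameter Mittag-Leffler function `E_μ(s) = Σ_{k≥0} s^k / Γ(1 + kμ)`. -/
noncomputable def mittagLeffler (μ s : ℝ) : ℝ := ∑' k : ℕ, s ^ k / Real.Gamma (1 + k * μ)

/-!
The Riemann–Liouville integral `I` of order `μ` with respect to `ψ` is a positive operator, and the
power rule says that `λ I` maps the `k`-th term of the series of `E_μ(λ (ψ - ψ a)^μ)` to the next
one. On `[a, x]` monotonicity of `ξ` turns the hypothesis into `η ≤ K + λ I η` with `K = ξ x` and
`λ = C Γ(μ)`. Iterating from a bound `η ≤ M` gives `η ≤ K ∑_{k < n} (k-th term) + M (n-th term)`,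
and the last summand vanishes in the limit because the series converges.
-/

theorem rpow_mul_exp_neg_le_Gamma {R t : ℝ} (hR : 0 ≤ R) (ht : 0 ≤ t) :
    R ^ t * Real.exp (-R) ≤ Real.Gamma (1 + t) := by
  have hsub : Ioi R ⊆ Ioi 0 := Ioi_subset_Ioi hR
  have hconv : IntegrableOn (fun x ↦ Real.exp (-x) * x ^ (1 + t - 1)) (Ioi 0) :=
    Real.GammaIntegral_convergent (by linarith)
  calc R ^ t * Real.exp (-R) = ∫ x in Ioi R, R ^ t * Real.exp (-x) := by
        rw [integral_const_mul, integral_exp_neg_Ioi]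
    _ ≤ ∫ x in Ioi R, Real.exp (-x) * x ^ (1 + t - 1) := by
        refine setIntegral_mono_on ((integrableOn_exp_neg_Ioi R).const_mul _)
          (hconv.mono_set hsub) measurableSet_Ioi fun x (hx : R < x) ↦ ?_
        rw [mul_comm, add_sub_cancel_left]
        gcongr
    _ ≤ ∫ x in Ioi 0, Real.exp (-x) * x ^ (1 + t - 1) := by
        refine setIntegral_mono_set hconv ?_ hsub.eventuallyLE
        filter_upwards [ae_restrict_mem measurableSet_Ioi] with x (hx : 0 < x)
        exact mul_nonneg (Real.exp_nonneg _) (Real.rpow_nonneg hx.le _)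
    _ = Real.Gamma (1 + t) := (Real.Gamma_eq_integral (by linarith)).symm

theorem summable_pow_div_Gamma {μ : ℝ} (hμ : 0 < μ) (z : ℝ) :
    Summable fun k : ℕ ↦ z ^ k / Real.Gamma (1 + k * μ) := by
  -- The lower bound `R ^ (k μ) e ^ (-R)` for `Γ(1 + k μ)` then beats `|z| ^ k` by a factor `2 ^ k`.
  obtain ⟨R, hR, hRμ⟩ : ∃ R : ℝ, 0 ≤ R ∧ R ^ μ = 2 * |z| :=
    ⟨(2 * |z|) ^ μ⁻¹, by positivity, Real.rpow_inv_rpow (by positivity) hμ.ne'⟩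
  refine Summable.of_norm_bounded (g := fun k : ℕ ↦ Real.exp R * (1 / 2) ^ k)
    (summable_geometric_two.mul_left _) fun k ↦ ?_
  have hΓ : 0 < Real.Gamma (1 + k * μ) := Real.Gamma_pos_of_pos (by positivity)
  rw [norm_div, norm_pow, Real.norm_eq_abs, Real.norm_of_nonneg hΓ.le, div_le_iff₀ hΓ]
  calc |z| ^ k = (1 / 2) ^ k * (R ^ μ) ^ k := by rw [hRμ, ← mul_pow]; ring
    _ = Real.exp R * (1 / 2) ^ k * (R ^ (k * μ) * Real.exp (-R)) := by
      rw [mul_comm (k : ℝ), Real.rpow_mul hR, Real.rpow_natCast, Real.exp_neg]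
      field_simp
    _ ≤ Real.exp R * (1 / 2) ^ k * Real.Gamma (1 + k * μ) := by
      gcongr
      exact rpow_mul_exp_neg_le_Gamma hR (by positivity)

theorem integral_rpow_mul_sub_rpow {u v L : ℝ} (hu : 0 < u) (hv : 0 < v) (hL : 0 < L) :
    ∫ x in (0 : ℝ)..L, x ^ (u - 1) * (L - x) ^ (v - 1) =
      L ^ (u + v - 1) * ProbabilityTheory.beta u v := by
  have hbeta := Complex.betaIntegral_scaled u v hL
  rw [Complex.betaIntegral_eq_Gamma_mul_div _ _ (by simpa) (by simpa)] at hbeta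
  have hint : ∫ x in (0 : ℝ)..L, (x : ℂ) ^ ((u : ℂ) - 1) * ((L : ℂ) - x) ^ ((v : ℂ) - 1) =
      ((∫ x in (0 : ℝ)..L, x ^ (u - 1) * (L - x) ^ (v - 1) : ℝ) : ℂ) := by
    rw [← intervalIntegral.integral_ofReal]
    refine intervalIntegral.integral_congr fun x hx ↦ ?_
    rw [uIcc_of_le hL.le] at hx
    simp only [Complex.ofReal_mul, Complex.ofReal_cpow hx.1,
      Complex.ofReal_cpow (sub_nonneg.2 hx.2), Complex.ofReal_sub, Complex.ofReal_one]
  have hpow : (L : ℂ) ^ ((u : ℂ) + v - 1) = ((L ^ (u + v - 1) : ℝ) : ℂ) := by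
    rw [Complex.ofReal_cpow hL.le]
    push_cast
    rfl
  rw [hint, hpow, ← Complex.ofReal_add, Complex.Gamma_ofReal, Complex.Gamma_ofReal,
    Complex.Gamma_ofReal] at hbeta
  exact_mod_cast hbeta

/-- The `k`-th term of the series of `E_μ(c t^μ)` for `0 ≤ t`, written with the single power
`t ^ (k * μ)` so that fractional integration acts on it by the power rule. -/
noncomputable def mittagLefflerTerm (μ c t : ℝ) (k : ℕ) : ℝ :=
  c ^ k * t ^ (k * μ) / Real.Gamma (1 + k * μ)

theorem mittagLefflerTerm_zero (μ c t : ℝ) : mittagLefflerTerm μ c t 0 = 1 := by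
  simp [mittagLefflerTerm]

theorem continuous_mittagLefflerTerm {μ : ℝ} (hμ : 0 ≤ μ) (c : ℝ) (k : ℕ) :
    Continuous fun t ↦ mittagLefflerTerm μ c t k :=
  ((Real.continuous_rpow_const (by positivity)).const_mul _).div_const _

theorem hasSum_mittagLefflerTerm {μ t : ℝ} (hμ : 0 < μ) (ht : 0 ≤ t) (c : ℝ) :
    HasSum (mittagLefflerTerm μ c t) (mittagLeffler μ (c * t ^ μ)) := by
  convert! (summable_pow_div_Gamma hμ (c * t ^ μ)).hasSum using 2 with k
  rw [mittagLefflerTerm, mul_pow, mul_comm (k : ℝ), Real.rpow_mul ht, Real.rpow_natCast]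

/-- `ψ` is continuous on `[a, b]` and has the nonnegative derivative `ψ'` on `(a, b)`: the
regularity needed to integrate with respect to `ψ`. Nothing is asked of `ψ'` at the endpoints. -/
structure HasNonnegDerivOn (ψ ψ' : ℝ → ℝ) (a b : ℝ) : Prop where
  continuousOn : ContinuousOn ψ (Icc a b)
  hasDerivAt : ∀ x ∈ Ioo a b, HasDerivAt ψ (ψ' x) x
  nonneg : ∀ x ∈ Ioo a b, 0 ≤ ψ' x

/-- The kernel of the Riemann–Liouville fractional integral of order `μ` with respect to `ψ`. -/
noncomputable def fracKernel (ψ ψ' : ℝ → ℝ) (μ x s : ℝ) : ℝ :=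
  ψ' s * (ψ x - ψ s) ^ (μ - 1) / Real.Gamma μ

/-- The left-sided Riemann–Liouville fractional integral of `f` of order `μ` with respect to `ψ`,
based at `a`. The derivative of `ψ` enters as a separate function `ψ'`, since `ψ` need not be
differentiable at the endpoints. -/
noncomputable def fracIntegral (ψ ψ' : ℝ → ℝ) (a μ : ℝ) (f : ℝ → ℝ) (x : ℝ) : ℝ :=
  ∫ s in a..x, fracKernel ψ ψ' μ x s * f s

section fracIntegral

variable {ψ ψ' f g : ℝ → ℝ} {a μ x : ℝ}

theorem Gamma_mul_fracIntegral (hμ : 0 < μ) :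
    Real.Gamma μ * fracIntegral ψ ψ' a μ f x =
      ∫ s in a..x, ψ' s * (ψ x - ψ s) ^ (μ - 1) * f s := by
  have hΓ := (Real.Gamma_pos_of_pos hμ).ne'
  rw [fracIntegral, ← intervalIntegral.integral_const_mul]
  congr 1 with s
  rw [fracKernel]
  field_simp

theorem fracIntegral_const_mul (c : ℝ) :
    fracIntegral ψ ψ' a μ (fun s ↦ c * f s) x = c * fracIntegral ψ ψ' a μ f x := by
  simp only [fracIntegral, mul_left_comm _ c, intervalIntegral.integral_const_mul]

theorem fracIntegral_add
    (hf : IntervalIntegrable (fun s ↦ fracKernel ψ ψ' μ x s * f s) volume a x)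
    (hg : IntervalIntegrable (fun s ↦ fracKernel ψ ψ' μ x s * g s) volume a x) :
    fracIntegral ψ ψ' a μ (fun s ↦ f s + g s) x =
      fracIntegral ψ ψ' a μ f x + fracIntegral ψ ψ' a μ g x := by
  simp only [fracIntegral, mul_add, intervalIntegral.integral_add hf hg]

theorem fracIntegral_finsetSum {ι : Type*} {t : Finset ι} {F : ι → ℝ → ℝ}
    (hF : ∀ i ∈ t, IntervalIntegrable (fun s ↦ fracKernel ψ ψ' μ x s * F i s) volume a x) :
    fracIntegral ψ ψ' a μ (fun s ↦ ∑ i ∈ t, F i s) x =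
      ∑ i ∈ t, fracIntegral ψ ψ' a μ (F i) x := by
  simp only [fracIntegral, Finset.mul_sum, intervalIntegral.integral_finsetSum hF]

end fracIntegral

/-- The `n`-th Picard iterate, started at the constant `M`, of `u ↦ K + c * I u` with `I` the
fractional integral of order `μ` with respect to `ψ`, as a function of `t = ψ x - ψ a`. -/
noncomputable def picardIterate (μ c K M : ℝ) (n : ℕ) (t : ℝ) : ℝ :=
  K * ∑ k ∈ Finset.range n, mittagLefflerTerm μ c t k + M * mittagLefflerTerm μ c t n

theorem continuous_picardIterate {μ : ℝ} (hμ : 0 ≤ μ) (c K M : ℝ) (n : ℕ) :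
    Continuous (picardIterate μ c K M n) :=
  ((continuous_finsetSum _ fun k _ ↦ continuous_mittagLefflerTerm hμ c k).const_mul K).add
    ((continuous_mittagLefflerTerm hμ c n).const_mul M)

theorem tendsto_picardIterate {μ t : ℝ} (hμ : 0 < μ) (ht : 0 ≤ t) (c K M : ℝ) :
    Filter.Tendsto (fun n ↦ picardIterate μ c K M n t) Filter.atTop
      (nhds (K * mittagLeffler μ (c * t ^ μ))) := by
  have hsum := hasSum_mittagLefflerTerm hμ ht c
  simpa only [picardIterate, mul_zero, add_zero] using
    (hsum.tendsto_sum_nat.const_mul K).add (hsum.summable.tendsto_atTop_zero.const_mul M)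

namespace HasNonnegDerivOn

variable {ψ ψ' f g : ℝ → ℝ} {a b μ c K M : ℝ}

theorem mono_right {x : ℝ} (hψ : HasNonnegDerivOn ψ ψ' a b) (hxb : x ≤ b) :
    HasNonnegDerivOn ψ ψ' a x where
  continuousOn := hψ.continuousOn.mono (Icc_subset_Icc_right hxb)
  hasDerivAt s hs := hψ.hasDerivAt s (Ioo_subset_Ioo_right hxb hs)
  nonneg s hs := hψ.nonneg s (Ioo_subset_Ioo_right hxb hs)

theorem monotoneOn (hψ : HasNonnegDerivOn ψ ψ' a b) : MonotoneOn ψ (Icc a b) := by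
  refine monotoneOn_of_hasDerivWithinAt_nonneg (f' := ψ') (convex_Icc a b) hψ.continuousOn ?_ ?_
  all_goals rw [interior_Icc]
  exacts [fun x hx ↦ (hψ.hasDerivAt x hx).hasDerivWithinAt, hψ.nonneg]

theorem apply_left_le {x : ℝ} (hψ : HasNonnegDerivOn ψ ψ' a b) (hx : x ∈ Icc a b) : ψ a ≤ ψ x :=
  hψ.monotoneOn (left_mem_Icc.2 (hx.1.trans hx.2)) hx hx.1

theorem fracKernel_nonneg {s : ℝ} (hψ : HasNonnegDerivOn ψ ψ' a b) (hμ : 0 ≤ μ)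
    (hs : s ∈ Ioo a b) : 0 ≤ fracKernel ψ ψ' μ b s := by
  have hle : ψ s ≤ ψ b := hψ.monotoneOn (Ioo_subset_Icc_self hs)
    (right_mem_Icc.2 (hs.1.trans hs.2).le) hs.2.le
  exact div_nonneg (mul_nonneg (hψ.nonneg s hs) (Real.rpow_nonneg (sub_nonneg.2 hle) _))
    (Real.Gamma_nonneg_of_nonneg hμ)

theorem intervalIntegrable_fracKernel (hψ : HasNonnegDerivOn ψ ψ' a b) (hab : a ≤ b)
    (hμ : 0 < μ) : IntervalIntegrable (fracKernel ψ ψ' μ b) volume a b := by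
  have hpow : IntervalIntegrable (fun u ↦ (ψ b - u) ^ (μ - 1)) volume (ψ a) (ψ b) := by
    have hpow₀ : IntervalIntegrable (fun u : ℝ ↦ u ^ (μ - 1)) volume (ψ b - ψ a) 0 :=
      intervalIntegral.intervalIntegrable_rpow' (by linarith)
    simpa only [sub_sub_cancel, sub_zero] using hpow₀.comp_sub_left (ψ b)
  refine IntervalIntegrable.div_const ?_ _
  refine (intervalIntegral.integrable_deriv_smul_comp_iff_of_deriv_nonneg ?_ ?_ ?_).2 hpow
  · simpa only [uIcc_of_le hab] using hψ.continuousOn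
  · simpa only [min_eq_left hab, max_eq_right hab] using hψ.hasDerivAt
  · simpa only [min_eq_left hab, max_eq_right hab] using hψ.nonneg

theorem intervalIntegrable_fracKernel_mul_of_bounded (hψ : HasNonnegDerivOn ψ ψ' a b)
    (hab : a ≤ b) (hμ : 0 < μ) (hf : AEStronglyMeasurable f (volume.restrict (Icc a b)))
    (hf_bdd : Bornology.IsBounded (f '' Icc a b)) :
    IntervalIntegrable (fun s ↦ fracKernel ψ ψ' μ b s * f s) volume a b := by
  obtain ⟨B, hB⟩ := hf_bdd.exists_norm_le
  rw [intervalIntegrable_iff_integrableOn_Icc_of_le hab]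
  refine ((intervalIntegrable_iff_integrableOn_Icc_of_le hab).1
    (hψ.intervalIntegrable_fracKernel hab hμ)).mul_bdd (c := B) hf ?_
  filter_upwards [ae_restrict_mem measurableSet_Icc] with s hs
  exact hB _ (mem_image_of_mem f hs)

theorem intervalIntegrable_fracKernel_mul_comp (hψ : HasNonnegDerivOn ψ ψ' a b) (hab : a ≤ b)
    (hμ : 0 < μ) (hg : Continuous g) :
    IntervalIntegrable (fun s ↦ fracKernel ψ ψ' μ b s * g (ψ s - ψ a)) volume a b := by
  refine (hψ.intervalIntegrable_fracKernel hab hμ).mul_continuousOn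
    (hg.comp_continuousOn (ContinuousOn.sub ?_ continuousOn_const))
  simpa only [uIcc_of_le hab] using hψ.continuousOn

theorem fracIntegral_mono (hψ : HasNonnegDerivOn ψ ψ' a b) (hab : a ≤ b) (hμ : 0 ≤ μ)
    (hf : IntervalIntegrable (fun s ↦ fracKernel ψ ψ' μ b s * f s) volume a b)
    (hg : IntervalIntegrable (fun s ↦ fracKernel ψ ψ' μ b s * g s) volume a b)
    (hfg : ∀ s ∈ Ioo a b, f s ≤ g s) :
    fracIntegral ψ ψ' a μ f b ≤ fracIntegral ψ ψ' a μ g b :=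
  intervalIntegral.integral_mono_on_of_le_Ioo hab hf hg fun s hs ↦
    mul_le_mul_of_nonneg_left (hfg s hs) (hψ.fracKernel_nonneg hμ hs)

theorem fracIntegral_comp (hψ : HasNonnegDerivOn ψ ψ' a b) (hab : a ≤ b) :
    fracIntegral ψ ψ' a μ (fun s ↦ g (ψ s - ψ a)) b =
      (Real.Gamma μ)⁻¹ * ∫ t in (0 : ℝ)..(ψ b - ψ a), g t * (ψ b - ψ a - t) ^ (μ - 1) := by
  have hsubst := intervalIntegral.integral_deriv_smul_comp_of_deriv_nonneg (a := a) (b := b)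
    (f := fun s ↦ ψ s - ψ a) (f' := ψ') (g := fun t ↦ g t * (ψ b - ψ a - t) ^ (μ - 1))
    (by simpa only [uIcc_of_le hab] using hψ.continuousOn.fun_sub continuousOn_const)
    (by simpa only [min_eq_left hab, max_eq_right hab] using
      fun s hs ↦ (hψ.hasDerivAt s hs).sub_const (ψ a))
    (by simpa only [min_eq_left hab, max_eq_right hab] using hψ.nonneg)
  rw [sub_self] at hsubst
  rw [← hsubst, fracIntegral, ← intervalIntegral.integral_const_mul]
  refine intervalIntegral.integral_congr fun s _ ↦ ?_
  simp only [fracKernel, Function.comp_apply, smul_eq_mul, sub_sub_sub_cancel_right]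
  ring

theorem fracIntegral_rpow {p : ℝ} (hψ : HasNonnegDerivOn ψ ψ' a b) (hab : a ≤ b)
    (hμ : 0 < μ) (hp : -1 < p) (hpμ : 0 < p + μ) :
    fracIntegral ψ ψ' a μ (fun s ↦ (ψ s - ψ a) ^ p) b =
      Real.Gamma (1 + p) / Real.Gamma (1 + (p + μ)) * (ψ b - ψ a) ^ (p + μ) := by
  rw [hψ.fracIntegral_comp (g := fun t ↦ t ^ p) hab]
  rcases (sub_nonneg.2 (hψ.apply_left_le (right_mem_Icc.2 hab))).eq_or_lt with hL | hL
  · simp [← hL, Real.zero_rpow hpμ.ne']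
  have hbeta := integral_rpow_mul_sub_rpow (u := 1 + p) (by linarith) hμ hL
  rw [add_sub_cancel_left, show 1 + p + μ - 1 = p + μ by ring] at hbeta
  have hΓ := (Real.Gamma_pos_of_pos hμ).ne'
  rw [hbeta, ProbabilityTheory.beta, add_assoc]
  field_simp

theorem mul_fracIntegral_mittagLefflerTerm (hψ : HasNonnegDerivOn ψ ψ' a b) (hab : a ≤ b)
    (hμ : 0 < μ) (c : ℝ) (k : ℕ) :
    c * fracIntegral ψ ψ' a μ (fun s ↦ mittagLefflerTerm μ c (ψ s - ψ a) k) b =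
      mittagLefflerTerm μ c (ψ b - ψ a) (k + 1) := by
  have hΓ : Real.Gamma (1 + k * μ) ≠ 0 := (Real.Gamma_pos_of_pos (by positivity)).ne'
  have hlin : fracIntegral ψ ψ' a μ (fun s ↦ mittagLefflerTerm μ c (ψ s - ψ a) k) b =
      c ^ k / Real.Gamma (1 + k * μ) *
        fracIntegral ψ ψ' a μ (fun s ↦ (ψ s - ψ a) ^ (k * μ)) b := by
    simp only [mittagLefflerTerm, mul_div_right_comm, fracIntegral_const_mul]
  have hk : (0 : ℝ) ≤ k * μ := by positivity
  rw [hlin, hψ.fracIntegral_rpow hab hμ (by linarith) (by linarith), mittagLefflerTerm,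
    show ((k + 1 : ℕ) : ℝ) * μ = k * μ + μ by push_cast; ring]
  field_simp
  ring

theorem add_mul_fracIntegral_picardIterate (hψ : HasNonnegDerivOn ψ ψ' a b) (hab : a ≤ b)
    (hμ : 0 < μ) (c K M : ℝ) (n : ℕ) :
    K + c * fracIntegral ψ ψ' a μ (fun s ↦ picardIterate μ c K M n (ψ s - ψ a)) b =
      picardIterate μ c K M (n + 1) (ψ b - ψ a) := by
  have hint {h : ℝ → ℝ} (hh : Continuous h) := hψ.intervalIntegrable_fracKernel_mul_comp hab hμ hh
  have hterm := continuous_mittagLefflerTerm hμ.le c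
  have hsum : Continuous fun t ↦ ∑ k ∈ Finset.range n, mittagLefflerTerm μ c t k :=
    continuous_finsetSum _ fun k _ ↦ hterm k
  simp only [picardIterate]
  rw [fracIntegral_add (hint (hsum.const_mul K)) (hint ((hterm n).const_mul M)),
    fracIntegral_const_mul, fracIntegral_const_mul,
    fracIntegral_finsetSum fun k _ ↦ hint (hterm k), Finset.sum_range_succ',
    mittagLefflerTerm_zero]
  simp only [← hψ.mul_fracIntegral_mittagLefflerTerm hab hμ, ← Finset.mul_sum]
  ring

theorem le_picardIterate (hψ : HasNonnegDerivOn ψ ψ' a b) (hμ : 0 < μ) (hc : 0 ≤ c)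
    (hf_int : ∀ x ∈ Icc a b,
      IntervalIntegrable (fun s ↦ fracKernel ψ ψ' μ x s * f s) volume a x)
    (hfM : ∀ x ∈ Icc a b, f x ≤ M)
    (hf : ∀ x ∈ Icc a b, f x ≤ K + c * fracIntegral ψ ψ' a μ f x) (n : ℕ) :
    ∀ x ∈ Icc a b, f x ≤ picardIterate μ c K M n (ψ x - ψ a) := by
  induction n with
  | zero => simpa [picardIterate, mittagLefflerTerm_zero] using hfM
  | succ n ih =>
    intro x hx
    have hψx := hψ.mono_right hx.2
    rw [← hψx.add_mul_fracIntegral_picardIterate hx.1 hμ]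
    refine (hf x hx).trans ?_
    gcongr
    exact hψx.fracIntegral_mono hx.1 hμ.le (hf_int x hx)
      (hψx.intervalIntegrable_fracKernel_mul_comp hx.1 hμ (continuous_picardIterate hμ.le c K M n))
      fun s hs ↦ ih s ⟨hs.1.le, hs.2.le.trans hx.2⟩

theorem le_mul_mittagLeffler (hψ : HasNonnegDerivOn ψ ψ' a b) (hμ : 0 < μ) (hc : 0 ≤ c)
    (hf_int : ∀ x ∈ Icc a b,
      IntervalIntegrable (fun s ↦ fracKernel ψ ψ' μ x s * f s) volume a x)
    (hf_bdd : BddAbove (f '' Icc a b))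
    (hf : ∀ x ∈ Icc a b, f x ≤ K + c * fracIntegral ψ ψ' a μ f x) :
    ∀ x ∈ Icc a b, f x ≤ K * mittagLeffler μ (c * (ψ x - ψ a) ^ μ) := by
  intro x hx
  obtain ⟨M, hM⟩ := hf_bdd
  exact ge_of_tendsto' (tendsto_picardIterate hμ (sub_nonneg.2 (hψ.apply_left_le hx)) c K M)
    fun n ↦ hψ.le_picardIterate hμ hc hf_int (fun y hy ↦ hM (mem_image_of_mem f hy)) hf n x hx

end HasNonnegDerivOn

theorem stmt_11_general {a b μ C : ℝ} {ψ ψ' ξ η : ℝ → ℝ} (hψ : HasNonnegDerivOn ψ ψ' a b)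
    (hμ : 0 < μ) (hC : 0 ≤ C) (hξ : MonotoneOn ξ (Icc a b))
    (hη : AEStronglyMeasurable η (volume.restrict (Icc a b)))
    (hη_bdd : Bornology.IsBounded (η '' Icc a b))
    (hineq : ∀ x ∈ Icc a b,
      η x ≤ ξ x + C * ∫ s in a..x, ψ' s * (ψ x - ψ s) ^ (μ - 1) * η s) :
    ∀ x ∈ Icc a b, η x ≤ ξ x * mittagLeffler μ (C * Real.Gamma μ * (ψ x - ψ a) ^ μ) := by
  intro x hx
  have hsub {y : ℝ} (hy : y ≤ b) : Icc a y ⊆ Icc a b := Icc_subset_Icc_right hy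
  have hc : 0 ≤ C * Real.Gamma μ := mul_nonneg hC (Real.Gamma_pos_of_pos hμ).le
  refine (hψ.mono_right hx.2).le_mul_mittagLeffler hμ hc (fun y hy ↦ ?_)
    (hη_bdd.subset (image_mono (hsub hx.2))).bddAbove (fun y hy ↦ ?_) x (right_mem_Icc.2 hx.1)
  · have hyb := hy.2.trans hx.2
    exact (hψ.mono_right hyb).intervalIntegrable_fracKernel_mul_of_bounded hy.1 hμ
      (hη.mono_set (hsub hyb)) (hη_bdd.subset (image_mono (hsub hyb)))
  · rw [mul_assoc, Gamma_mul_fracIntegral hμ]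
    exact (hineq y (hsub hx.2 hy)).trans (by gcongr; exact hξ (hsub hx.2 hy) hx hy.2)

theorem stmt_11
    (a b μ C : ℝ) (ψ ξ η : ℝ → ℝ)
    (hab : a < b)
    (hψ : ContDiff ℝ 1 ψ)
    (hmono : StrictMonoOn ψ (Icc a b))
    (hψpos : ∀ x ∈ Icc a b, 0 < deriv ψ x)
    (hμ : 0 < μ) (hC : 0 < C)
    (hξ0 : ∀ x ∈ Icc a b, 0 ≤ ξ x)
    (hξmono : MonotoneOn ξ (Icc a b))
    (hξint : LocallyIntegrableOn ξ (Icc a b) volume)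
    (hη : ContinuousOn η (Icc a b))
    (hη0 : ∀ x ∈ Icc a b, 0 ≤ η x)
    (hineq : ∀ x ∈ Icc a b,
      η x ≤ ξ x + C * ∫ s in a..x, deriv ψ s * (ψ x - ψ s) ^ (μ - 1) * η s) :
    ∀ x ∈ Icc a b,
      η x ≤ ξ x * mittagLeffler μ (C * Real.Gamma μ * (ψ x - ψ a) ^ μ) :=
  stmt_11_general
    ⟨hψ.continuous.continuousOn, fun x _ ↦ (hψ.differentiable one_ne_zero x).hasDerivAt,
      fun x hx ↦ (hψpos x (Ioo_subset_Icc_self hx)).le⟩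
    hμ hC.le hξmono (hη.aestronglyMeasurable measurableSet_Icc)
    (isCompact_Icc.image_of_continuousOn hη).isBounded hineq
end
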